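/- In the conditioned bunkbed percolation model \mathcal{E}_T on G_1 with T=\{2,5,8\} at p=1/2, conditioned additionally on the post set being exactly \{2,5,8\}, the conditional probability of P_+ strictly exceeds that of P_-, where P_\varepsilon = \{1^- \to 3^\varepsilon, 1^- \to 5^- or 5^+\} \cap \{1^- \not\to 3^{-\varepsilon}\}. -/

import Mathlib

/-- Edges of the bunkbed graph of a directed graph on vertex type `V`:
`horiz u v ε` is the copy of the directed edge `(u,v)` in bunk `ε`
(`false` = lower bunk `-`, `true` = upper bunk `+`); `vert w` is the
bidirected vertical edge `(w⁻, w⁺)`. -/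
inductive BBEdge (V : Type) : Type
  | horiz : V → V → Bool → BBEdge V
  | vert  : V → BBEdge V
deriving DecidableEq

/-- The `F`-mirroring map on single edges: vertical edges are fixed, a horizontal
edge whose shadow lies in `F` is sent to its mirrored copy in the other bunk, and
horizontal edges with shadow outside `F` are fixed. -/
def mir {V : Type} [DecidableEq V] (F : Finset (V × V)) : BBEdge V → BBEdge V
  | .horiz u v ε => if (u, v) ∈ F then .horiz u v (!ε) else .horiz u v ε
  | .vert w => .vert w

/-- The `F`-mirrored subgraph `M(H,F)`. -/
def M {V : Type} [DecidableEq V] (H : Finset (BBEdge V)) (F : Finset (V × V)) :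
    Finset (BBEdge V) :=
  H.image (mir F)
/-- The edge set of the bunkbed graph of the directed graph with vertex set `Vs`
and edge set `E`: the vertical edges at all vertices together with the two
horizontal copies of each edge. -/
def bbEdges {V : Type} [DecidableEq V] (Vs : Finset V) (E : Finset (V × V)) :
    Finset (BBEdge V) :=
  Vs.image BBEdge.vert ∪ E.image (fun p => BBEdge.horiz p.1 p.2 false) ∪
    E.image (fun p => BBEdge.horiz p.1 p.2 true)
/-- Probability of the event `A` under uniform (`p = 1/2`) Bernoulli bond
percolation on the edge set `s`: a subgraph is a uniformly random subset of `s`. -/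
noncomputable def Pr {V : Type} [DecidableEq V] (s : Finset (BBEdge V))
    (A : Finset (BBEdge V) → Prop) : ℚ :=
  letI := Classical.decPred A
  ((s.powerset.filter A).card : ℚ) / (s.powerset.card : ℚ)

/-- Conditional probability of `A` given `C` under uniform percolation on `s`. -/
noncomputable def CondPr {V : Type} [DecidableEq V] (s : Finset (BBEdge V))
    (C A : Finset (BBEdge V) → Prop) : ℚ :=
  Pr s (fun H => A H ∧ C H) / Pr s C

/-- One step of directed traversal in a subgraph `H` of the bunkbed graph:
horizontal edges are used in their direction within a bunk, and vertical edges
may be traversed in both directions. Vertices of the bunkbed graph are pairs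
`(w, ε)` with `ε : Bool` the bunk label (`false` = `-`, `true` = `+`). -/
def bbStep {V : Type} [DecidableEq V] (H : Finset (BBEdge V)) :
    V × Bool → V × Bool → Prop := fun a b =>
  (a.1 = b.1 ∧ a.2 ≠ b.2 ∧ BBEdge.vert a.1 ∈ H) ∨
    (a.2 = b.2 ∧ BBEdge.horiz a.1 b.1 a.2 ∈ H)

/-- Directed reachability `x → y` in a subgraph of the bunkbed graph. -/
def bbReach {V : Type} [DecidableEq V] (H : Finset (BBEdge V))
    (a b : V × Bool) : Prop :=
  Relation.ReflTransGen (bbStep H) a b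
/-- The conditioning event of the conditioned bunkbed model `𝓔_T`: all vertices
of `T` are posts. -/
def postCond {V : Type} [DecidableEq V] (T : Finset V)
    (H : Finset (BBEdge V)) : Prop :=
  ∀ t ∈ T, BBEdge.vert t ∈ H

/-- The edge set of the graph `G₁` of Przybyłowski's counterexample, on
vertices `1,…,9`. -/
def E1 : Finset (ℕ × ℕ) :=
  {(1,2), (1,4), (2,3), (3,4), (4,5), (3,7), (5,6), (6,7), (6,9), (7,8), (8,9)}

/-- The vertex set of `G₁`. -/
def V1 : Finset ℕ := {1, 2, 3, 4, 5, 6, 7, 8, 9}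

/-- The conditioning set `T = {2,5,8}`. -/
def T1 : Finset ℕ := {2, 5, 8}

/-- The edge set of the bunkbed graph of `G₁`. -/
def s1 : Finset (BBEdge ℕ) := bbEdges V1 E1

/-- The event `F` that the post set is exactly `{2,5,8}`. -/
def exactPosts (H : Finset (BBEdge ℕ)) : Prop :=
  ∀ w : ℕ, BBEdge.vert w ∈ H ↔ w ∈ T1

/-- The event `P_ε = {1⁻ → 3^ε, 5^±} ∩ {1⁻ ↛ 3^{-ε}}` (`ε : Bool`, `false` = `-`,
`true` = `+`). -/
def Pev (ε : Bool) (H : Finset (BBEdge ℕ)) : Prop :=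
  bbReach H (1, false) (3, ε) ∧
    (bbReach H (1, false) (5, false) ∨ bbReach H (1, false) (5, true)) ∧
    ¬ bbReach H (1, false) (3, !ε)

theorem mir_involutive {V : Type} [DecidableEq V] (F : Finset (V × V)) :
    Function.Involutive (mir F) := by
  rintro (⟨u, v, ε⟩ | w)
  · by_cases h : (u, v) ∈ F <;> simp [mir, h]
  · rfl

theorem mem_M {V : Type} [DecidableEq V] {H : Finset (BBEdge V)} {F : Finset (V × V)}
    {e : BBEdge V} : e ∈ M H F ↔ mir F e ∈ H := by
  refine ⟨fun h => ?_, fun h => Finset.mem_image.2 ⟨_, h, mir_involutive F e⟩⟩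
  obtain ⟨e', he', rfl⟩ := Finset.mem_image.1 h
  rwa [mir_involutive F e']

theorem M_M {V : Type} [DecidableEq V] (H : Finset (BBEdge V)) (F : Finset (V × V)) :
    M (M H F) F = H := by
  ext e
  rw [mem_M, mem_M, mir_involutive F e]

theorem horiz_mem_bbEdges {V : Type} [DecidableEq V] {Vs : Finset V} {E : Finset (V × V)}
    {u v : V} {ε : Bool} : BBEdge.horiz u v ε ∈ bbEdges Vs E ↔ (u, v) ∈ E := by
  cases ε <;> simp [bbEdges]

theorem vert_mem_bbEdges {V : Type} [DecidableEq V] {Vs : Finset V} {E : Finset (V × V)}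
    {w : V} : BBEdge.vert w ∈ bbEdges Vs E ↔ w ∈ Vs := by
  simp [bbEdges]

theorem mir_mem_bbEdges {V : Type} [DecidableEq V] {Vs : Finset V} {E F : Finset (V × V)}
    {e : BBEdge V} : mir F e ∈ bbEdges Vs E ↔ e ∈ bbEdges Vs E := by
  rcases e with ⟨u, v, ε⟩ | w
  · by_cases h : (u, v) ∈ F <;> simp [mir, h, horiz_mem_bbEdges]
  · rfl

theorem M_subset_bbEdges {V : Type} [DecidableEq V] {Vs : Finset V} {E F : Finset (V × V)}
    {H : Finset (BBEdge V)} (h : H ⊆ bbEdges Vs E) : M H F ⊆ bbEdges Vs E :=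
  fun _ he => mir_mem_bbEdges.1 (h (mem_M.1 he))

/-- A vertex other than a postless source is reached through a horizontal edge entering its
shadow, either in the same bunk or followed by a vertical step. -/
theorem bbReach_iff_of_vert_notMem {V : Type} [DecidableEq V] {H : Finset (BBEdge V)}
    {a : V × Bool} (ha : BBEdge.vert a.1 ∉ H) (x : V × Bool) :
    bbReach H a x ↔ x = a ∨ ∃ u δ, bbReach H a (u, δ) ∧ BBEdge.horiz u x.1 δ ∈ H ∧
      (δ = x.2 ∨ BBEdge.vert x.1 ∈ H) := by
  constructor
  · intro h
    induction h with
    | refl => exact Or.inl rfl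
    | @tail y z hy hyz ih =>
      rcases hyz with ⟨h1, -, h3⟩ | ⟨h1, h2⟩
      · rcases ih with rfl | ⟨u, δ, hu, hh, -⟩
        · exact absurd h3 ha
        · rw [h1] at hh h3
          exact Or.inr ⟨u, δ, hu, hh, Or.inr h3⟩
      · exact Or.inr ⟨y.1, y.2, hy, h2, Or.inl h1⟩
  · rintro (rfl | ⟨u, δ, hu, hh, hd⟩)
    · exact Relation.ReflTransGen.refl
    · have hx : bbReach H a (x.1, δ) := hu.tail (Or.inr ⟨rfl, hh⟩)
      by_cases hδ : δ = x.2
      · subst hδ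
        exact hx
      · exact hx.tail (Or.inl ⟨rfl, hδ, hd.resolve_left hδ⟩)

theorem Pev_iff {H : Finset (BBEdge ℕ)} (hs : H ⊆ s1) (hp : exactPosts H) (ε : Bool) :
    Pev ε H ↔ BBEdge.horiz 1 2 false ∈ H ∧ BBEdge.horiz 2 3 ε ∈ H ∧
      BBEdge.horiz 2 3 (!ε) ∉ H ∧
      ((BBEdge.horiz 1 4 false ∈ H ∧ BBEdge.horiz 4 5 false ∈ H) ∨
        (BBEdge.horiz 3 4 ε ∈ H ∧ BBEdge.horiz 4 5 ε ∈ H)) := by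
  have hE {u v : ℕ} {δ : Bool} (h : BBEdge.horiz u v δ ∈ H) : (u, v) ∈ E1 :=
    horiz_mem_bbEdges.1 (hs h)
  have key := bbReach_iff_of_vert_notMem (H := H) (a := (1, false))
    (by rw [hp]; decide)
  have r1 (δ : Bool) : bbReach H (1, false) (1, δ) ↔ δ = false := by
    rw [key]
    constructor
    · rintro (h | ⟨u, η, -, hh, -⟩)
      · exact (Prod.ext_iff.1 h).2
      · have := hE hh
        simp [E1] at this
    · rintro rfl
      exact Or.inl rfl
  have r2 (δ : Bool) : bbReach H (1, false) (2, δ) ↔ BBEdge.horiz 1 2 false ∈ H := by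
    rw [key]
    constructor
    · rintro (h | ⟨u, η, hu, hh, -⟩)
      · simp at h
      · have := hE hh
        simp [E1] at this
        subst this
        obtain rfl := (r1 η).1 hu
        exact hh
    · intro h
      exact Or.inr ⟨1, false, (r1 _).2 rfl, h, Or.inr ((hp 2).2 (by decide))⟩
  have r3 (δ : Bool) : bbReach H (1, false) (3, δ) ↔
      BBEdge.horiz 1 2 false ∈ H ∧ BBEdge.horiz 2 3 δ ∈ H := by
    rw [key]
    constructor
    · rintro (h | ⟨u, η, hu, hh, hd⟩)
      · simp at h
      · have := hE hh
        simp [E1] at this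
        subst this
        obtain rfl := hd.resolve_right (by rw [hp]; simp [T1])
        exact ⟨(r2 _).1 hu, hh⟩
    · rintro ⟨h, h'⟩
      exact Or.inr ⟨2, δ, (r2 _).2 h, h', Or.inl rfl⟩
  have r4 (δ : Bool) : bbReach H (1, false) (4, δ) ↔
      (δ = false ∧ BBEdge.horiz 1 4 false ∈ H) ∨
      (bbReach H (1, false) (3, δ) ∧ BBEdge.horiz 3 4 δ ∈ H) := by
    rw [key]
    constructor
    · rintro (h | ⟨u, η, hu, hh, hd⟩)
      · simp at h
      · have := hE hh
        simp [E1] at this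
        obtain rfl := hd.resolve_right (by rw [hp]; simp [T1])
        rcases this with rfl | rfl
        · obtain rfl := (r1 _).1 hu
          exact Or.inl ⟨rfl, hh⟩
        · exact Or.inr ⟨hu, hh⟩
    · rintro (⟨rfl, h⟩ | ⟨h, h'⟩)
      · exact Or.inr ⟨1, false, (r1 _).2 rfl, h, Or.inl rfl⟩
      · exact Or.inr ⟨3, δ, h, h', Or.inl rfl⟩
  have r5 (δ : Bool) : bbReach H (1, false) (5, δ) ↔
      ∃ η, bbReach H (1, false) (4, η) ∧ BBEdge.horiz 4 5 η ∈ H := by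
    rw [key]
    constructor
    · rintro (h | ⟨u, η, hu, hh, -⟩)
      · simp at h
      · have := hE hh
        simp [E1] at this
        subst this
        exact ⟨η, hu, hh⟩
    · rintro ⟨η, h, h'⟩
      exact Or.inr ⟨4, η, h, h', Or.inr ((hp 5).2 (by decide))⟩
  cases ε <;> simp only [Pev, r5, r4, r3, Bool.exists_bool, Bool.not_false, Bool.not_true,
    reduceCtorEq] <;>
    clear r1 r2 r3 r4 r5 key hE hp hs <;> grind

/-- The shadows mirrored to pass from `P₋` to `P₊`: the edge `(2,3)` alone when `1⁻ → 4⁻` is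
open, and otherwise the whole path `2 → 3 → 4 → 5`. -/
def mirrorShadows (H : Finset (BBEdge ℕ)) : Finset (ℕ × ℕ) :=
  if BBEdge.horiz 1 4 false ∈ H then {(2, 3)} else {(2, 3), (3, 4), (4, 5)}

theorem mirrorShadows_M (H : Finset (BBEdge ℕ)) :
    mirrorShadows (M H (mirrorShadows H)) = mirrorShadows H := by
  by_cases h : BBEdge.horiz 1 4 false ∈ H <;> simp [mirrorShadows, h, mem_M, mir]

theorem mirror_involutive :
    Function.Involutive fun H : Finset (BBEdge ℕ) => M H (mirrorShadows H) := by
  intro H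
  simp only [mirrorShadows_M, M_M]

theorem exactPosts_M {H : Finset (BBEdge ℕ)} {F : Finset (ℕ × ℕ)} (hp : exactPosts H) :
    exactPosts (M H F) := fun w => by
  rw [mem_M]
  exact hp w

theorem Pev_true_mirror {H : Finset (BBEdge ℕ)} (hs : H ⊆ s1) (hp : exactPosts H)
    (h : Pev false H) : Pev true (M H (mirrorShadows H)) := by
  rw [Pev_iff hs hp] at h
  rw [Pev_iff (M_subset_bbEdges hs) (exactPosts_M hp)]
  by_cases hc : BBEdge.horiz 1 4 false ∈ H
  · simp [mirrorShadows, mem_M, mir, hc]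
    tauto
  · simp [mirrorShadows, mem_M, mir, hc]
    tauto

/-- A configuration in `P₊` that is not the mirror of one in `P₋`: the edge `1⁻ → 4⁻` is open
but leads nowhere, and `5` is reached in the upper bunk only. -/
def upperWitness : Finset (BBEdge ℕ) :=
  {.vert 2, .vert 5, .vert 8, .horiz 1 2 false, .horiz 1 4 false, .horiz 2 3 true,
    .horiz 3 4 true, .horiz 4 5 true}

theorem upperWitness_subset : upperWitness ⊆ s1 := by decide

theorem exactPosts_upperWitness : exactPosts upperWitness := fun w => by
  simp [upperWitness, T1]

theorem Pev_true_upperWitness : Pev true upperWitness := by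
  rw [Pev_iff upperWitness_subset exactPosts_upperWitness]
  decide

theorem not_Pev_false_mirror_upperWitness :
    ¬ Pev false (M upperWitness (mirrorShadows upperWitness)) := by
  rw [Pev_iff (M_subset_bbEdges upperWitness_subset) (exactPosts_M exactPosts_upperWitness)]
  decide

theorem postCond_of_exactPosts {H : Finset (BBEdge ℕ)} (hp : exactPosts H) : postCond T1 H :=
  fun t ht => (hp t).2 ht

theorem Pr_lt_Pr_of_injective {V : Type} [DecidableEq V] {s : Finset (BBEdge V)}
    {A B : Finset (BBEdge V) → Prop} {f : Finset (BBEdge V) → Finset (BBEdge V)}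
    (hf : Function.Injective f) (hAB : ∀ H ⊆ s, A H → f H ⊆ s ∧ B (f H))
    {K : Finset (BBEdge V)} (hKs : K ⊆ s) (hK : B K) (hKf : ∀ H ⊆ s, A H → f H ≠ K) :
    Pr s A < Pr s B := by
  classical
  have hcard : (s.powerset.filter A).card < (s.powerset.filter B).card := by
    rw [← Finset.card_image_of_injective _ hf]
    refine Finset.card_lt_card (Finset.ssubset_iff_subset_ne.2 ⟨fun H' h => ?_, fun h => ?_⟩)
    · simp only [Finset.mem_image, Finset.mem_filter, Finset.mem_powerset] at h ⊢
      obtain ⟨H, ⟨hs, hA⟩, rfl⟩ := h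
      exact hAB H hs hA
    · have hmem : K ∈ s.powerset.filter B := by simp [hKs, hK]
      rw [← h] at hmem
      simp only [Finset.mem_image, Finset.mem_filter, Finset.mem_powerset] at hmem
      obtain ⟨H, ⟨hs, hA⟩, hHK⟩ := hmem
      exact hKf H hs hA hHK
  unfold Pr
  have hpos : (0 : ℚ) < s.powerset.card := by
    exact_mod_cast Finset.card_pos.2 ⟨∅, Finset.empty_mem_powerset s⟩
  refine div_lt_div_of_pos_right ?_ hpos
  convert (Nat.cast_lt (α := ℚ)).2 hcard

theorem Pr_pos {V : Type} [DecidableEq V] {s K : Finset (BBEdge V)}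
    {A : Finset (BBEdge V) → Prop} (hKs : K ⊆ s) (hK : A K) : 0 < Pr s A := by
  classical
  refine div_pos ?_ ?_
  · exact Nat.cast_pos.2 (Finset.card_pos.2 ⟨K, by simp [hKs, hK]⟩)
  · exact Nat.cast_pos.2 (Finset.card_pos.2 ⟨∅, Finset.empty_mem_powerset s⟩)

/-- in the conditioned bunkbed percolation model `𝓔_T` on `G₁` with
`T = {2,5,8}` at `p = 1/2`, conditioned additionally on the post set being exactly
`{2,5,8}`, the conditional probability of `P₊` strictly exceeds that of `P₋`. -/
theorem Pplus_beats_Pminus :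
    CondPr s1 (fun H => postCond T1 H ∧ exactPosts H) (Pev false) <
      CondPr s1 (fun H => postCond T1 H ∧ exactPosts H) (Pev true) := by
  refine div_lt_div_of_pos_right ?_ (Pr_pos upperWitness_subset
    ⟨postCond_of_exactPosts exactPosts_upperWitness, exactPosts_upperWitness⟩)
  refine Pr_lt_Pr_of_injective mirror_involutive.injective ?_ upperWitness_subset
    ⟨Pev_true_upperWitness, postCond_of_exactPosts exactPosts_upperWitness,
      exactPosts_upperWitness⟩ ?_
  · rintro H hs ⟨hP, -, hp⟩
    exact ⟨M_subset_bbEdges hs, Pev_true_mirror hs hp hP,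
      postCond_of_exactPosts (exactPosts_M hp), exactPosts_M hp⟩
  · rintro H - ⟨hP, -⟩ hH
    apply not_Pev_false_mirror_upperWitness
    rw [← hH]
    rwa [show M (M H _) _ = H from mirror_involutive H]
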